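/- For every M > 0 there exists a single-buyer pricing instance with signals (whose conditional value distributions are not all regular), together with an ex post individually rational, Bayesian incentive compatible mechanism with no negative payments, whose expected revenue is at least M times the optimal revenue under public signals DRev of that instance. -/

import Mathlib

open MeasureTheory Set

/-- A single-buyer pricing instance with signals: a measurable space `S` of signals with a
σ-finite measure `μ`, and a measurable joint density `f` on values `t ∈ ℝ_{≥0}` and
signals `s ∈ S` with total integral `1`. -/
structure SignalInstance where
  /-- the signal space -/
  (S : Type)
  [mS : MeasurableSpace S]
  /-- a σ-finite measure on the signal space -/
  (μ : MeasureTheory.Measure S)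
  (sigmaFinite : MeasureTheory.SigmaFinite μ)
  /-- the joint density of (value, signal) -/
  (f : ℝ → S → ℝ)
  (f_meas : Measurable fun q : ℝ × S => f q.1 q.2)
  (f_nonneg : ∀ t s, 0 ≤ f t s)
  (f_zero : ∀ t s, t < 0 → f t s = 0)
  (f_prob : ∫ s, (∫ t in Set.Ici (0:ℝ), f t s) ∂μ = 1)

attribute [instance] SignalInstance.mS

/-- The expected revenue of a mechanism with payment rule `p` on instance `I`. -/
noncomputable def SignalInstance.Rev (I : SignalInstance) (p : ℝ → I.S → ℝ) : ℝ :=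
  ∫ s, (∫ t in Set.Ici (0:ℝ), I.f t s * p t s) ∂I.μ

/-- The optimal revenue under public signals (naïve pricing revenue):
`DRev = ∫_S sup_{r≥0} r·(∫_{t≥r} f(t,s) dt) dμ(s)`. -/
noncomputable def SignalInstance.DRev (I : SignalInstance) : ℝ :=
  ∫ s, sSup {y : ℝ | ∃ r : ℝ, 0 ≤ r ∧ y = r * ∫ t in Set.Ici r, I.f t s} ∂I.μ

/-- The dyadic cell `[2 ^ k, 2 ^ (k + 1))`. -/
def dyadicCell (k : ℕ) : Set ℝ := Ico (2 ^ k) (2 ^ (k + 1))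

/-- The step function with value `w k` on the dyadic cell of each `k ∈ s`, and `0` elsewhere. -/
noncomputable def dyadicStep {n : ℕ} (w : ℕ → ℝ) (t : ℝ) (s : Finset (Fin n)) : ℝ :=
  ∑ k ∈ s, (dyadicCell k).indicator (fun _ => w k) t

lemma measurableSet_dyadicCell (k : ℕ) : MeasurableSet (dyadicCell k) := measurableSet_Ico

lemma dyadicCell_index_unique {t : ℝ} {k l : ℕ} (hk : t ∈ dyadicCell k) (hl : t ∈ dyadicCell l) :
    k = l := by
  have h₁ : (2 : ℝ) ^ k < 2 ^ (l + 1) := hk.1.trans_lt hl.2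
  have h₂ : (2 : ℝ) ^ l < 2 ^ (k + 1) := hl.1.trans_lt hk.2
  rw [pow_lt_pow_iff_right₀ one_lt_two] at h₁ h₂
  omega

section DyadicStep

variable {n : ℕ}

lemma dyadicStep_of_mem (w : ℕ → ℝ) {t : ℝ} {k : Fin n} (hk : t ∈ dyadicCell k)
    (s : Finset (Fin n)) : dyadicStep w t s = if k ∈ s then w k else 0 := by
  have h : ∀ l : Fin n, (dyadicCell l).indicator (fun _ => w l) t = if k = l then w l else 0 := by
    intro l
    split_ifs with hkl
    · subst hkl
      exact indicator_of_mem hk _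
    · exact indicator_of_notMem (fun hl => hkl (Fin.ext (dyadicCell_index_unique hk hl))) _
  simp only [dyadicStep, h, Finset.sum_ite_eq]

lemma dyadicStep_of_notMem (w : ℕ → ℝ) {t : ℝ} (ht : ∀ k : Fin n, t ∉ dyadicCell k)
    (s : Finset (Fin n)) : dyadicStep w t s = 0 :=
  Finset.sum_eq_zero fun k _ => indicator_of_notMem (ht k) _

lemma dyadicStep_of_neg (w : ℕ → ℝ) {t : ℝ} (ht : t < 0) (s : Finset (Fin n)) :
    dyadicStep w t s = 0 :=
  dyadicStep_of_notMem w (fun k hk => by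
    have : (0 : ℝ) < 2 ^ (k : ℕ) := by positivity
    exact absurd hk.1 (by linarith)) s

lemma dyadicStep_nonneg {w : ℕ → ℝ} (hw : ∀ k, 0 ≤ w k) (t : ℝ) (s : Finset (Fin n)) :
    0 ≤ dyadicStep w t s :=
  Finset.sum_nonneg fun k _ => indicator_nonneg (fun _ _ => hw k) t

lemma dyadicStep_mul (v w : ℕ → ℝ) (t : ℝ) (s : Finset (Fin n)) :
    dyadicStep v t s * dyadicStep w t s = dyadicStep (fun k => v k * w k) t s := by
  by_cases h : ∃ k : Fin n, t ∈ dyadicCell k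
  · obtain ⟨k, hk⟩ := h
    simp only [dyadicStep_of_mem _ hk]
    split_ifs <;> simp
  · push Not at h
    simp [dyadicStep_of_notMem _ h]

lemma measurable_dyadicStep (w : ℕ → ℝ) (s : Finset (Fin n)) :
    Measurable fun t => dyadicStep w t s :=
  Finset.measurable_fun_sum _ fun k _ => measurable_const.indicator (measurableSet_dyadicCell k)

lemma measurable_dyadicStep_uncurry (w : ℕ → ℝ) :
    @Measurable _ _ (@Prod.instMeasurableSpace _ _ _ ⊤) _
      fun q : ℝ × Finset (Fin n) => dyadicStep w q.1 q.2 := by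
  let _ : MeasurableSpace (Finset (Fin n)) := ⊤
  have : DiscreteMeasurableSpace (Finset (Fin n)) := ⟨fun _ => trivial⟩
  exact measurable_from_prod_countable_left fun s => measurable_dyadicStep w s

lemma integrable_indicator_dyadicCell (c : ℝ) (k : ℕ) :
    Integrable ((dyadicCell k).indicator fun _ => c) :=
  (integrable_indicator_iff (measurableSet_dyadicCell k)).2
    (integrableOn_const (by simp [dyadicCell]))

lemma integrable_dyadicStep (w : ℕ → ℝ) (s : Finset (Fin n)) :
    Integrable fun t => dyadicStep w t s :=
  integrable_finsetSum _ fun k _ => integrable_indicator_dyadicCell (w k) k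

lemma setIntegral_dyadicStep (w : ℕ → ℝ) (s : Finset (Fin n)) :
    ∫ t in Ici (0 : ℝ), dyadicStep w t s = ∑ k ∈ s, 2 ^ (k : ℕ) * w k := by
  rw [setIntegral_eq_integral_of_forall_compl_eq_zero (s := Ici (0 : ℝ))
    fun t ht => dyadicStep_of_neg w (not_le.1 ht) s]
  unfold dyadicStep
  rw [integral_finsetSum _ fun (k : Fin n) _ => integrable_indicator_dyadicCell (w k) k]
  refine Finset.sum_congr rfl fun k _ => ?_
  rw [integral_indicator (measurableSet_dyadicCell k), setIntegral_const, dyadicCell,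
    Real.volume_real_Ico_of_le (pow_le_pow_right₀ one_le_two k.1.le_succ), smul_eq_mul, pow_succ]
  ring

/-- A step density of order `t⁻²` has bounded posted-price revenue. -/
lemma mul_setIntegral_dyadicStep_le {C : ℝ} (hC : 0 ≤ C) {r : ℝ} (hr : 0 ≤ r)
    (s : Finset (Fin n)) :
    r * ∫ t in Ici r, dyadicStep (fun k => C * (4 ^ k)⁻¹) t s ≤ 4 * C := by
  rcases hr.eq_or_lt with rfl | hr
  · simp [hC]
  have hint : IntegrableOn (fun t : ℝ => 4 * C * t ^ (-2 : ℝ)) (Ioi r) :=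
    (integrableOn_Ioi_rpow_of_lt (by norm_num) hr).const_mul _
  have hle : ∫ t in Ioi r, dyadicStep (fun k => C * (4 ^ k)⁻¹) t s ≤
      ∫ t in Ioi r, 4 * C * t ^ (-2 : ℝ) := by
    refine setIntegral_mono_on (integrable_dyadicStep _ s).integrableOn hint measurableSet_Ioi ?_
    intro t ht
    have ht0 : 0 < t := hr.trans ht
    have hpos : 0 ≤ 4 * C * t ^ (-2 : ℝ) := by positivity
    by_cases h : ∃ k : Fin n, t ∈ dyadicCell k
    · obtain ⟨k, hk⟩ := h
      rw [dyadicStep_of_mem _ hk]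
      split_ifs
      · have hsq : t ^ 2 ≤ 4 * 4 ^ (k : ℕ) := by
          have h4 : (4 : ℝ) * 4 ^ (k : ℕ) = (2 ^ ((k : ℕ) + 1)) ^ 2 := by
            rw [← pow_mul, mul_comm, ← pow_succ, mul_comm _ 2, pow_mul]
            norm_num
          rw [h4]
          exact pow_le_pow_left₀ ht0.le hk.2.le 2
        rw [Real.rpow_neg ht0.le, Real.rpow_two, mul_comm 4 C, mul_assoc]
        gcongr
        rw [← div_eq_mul_inv, inv_eq_one_div, div_le_div_iff₀ (by positivity) (by positivity)]
        linarith
      · exact hpos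
    · push Not at h
      rwa [dyadicStep_of_notMem _ h]
  rw [integral_Ici_eq_integral_Ioi]
  refine (mul_le_mul_of_nonneg_left hle hr.le).trans_eq ?_
  rw [integral_const_mul, integral_Ioi_rpow_of_lt (by norm_num) hr]
  norm_num
  rw [Real.rpow_neg_one]
  field_simp

end DyadicStep

lemma two_mul_sum_card_finset (n : ℕ) :
    2 * ∑ s : Finset (Fin n), (s.card : ℝ) = n * 2 ^ n := by
  have h : ∑ s : Finset (Fin n), (s.card : ℝ) = ∑ s : Finset (Fin n), (sᶜ.card : ℝ) :=
    (Equiv.sum_comp (compl_involutive (α := Finset (Fin n))).toPerm fun s => (s.card : ℝ)).symm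
  have hn : ∀ s : Finset (Fin n), (s.card : ℝ) + (sᶜ.card : ℝ) = n := fun s => by
    exact_mod_cast (Finset.card_add_card_compl s).trans (Fintype.card_fin n)
  calc 2 * ∑ s : Finset (Fin n), (s.card : ℝ)
      = ∑ s : Finset (Fin n), ((s.card : ℝ) + (sᶜ.card : ℝ)) := by
        rw [Finset.sum_add_distrib, ← h, two_mul]
    _ = n * 2 ^ n := by simp [hn, mul_comm]

/-- Among the subsets containing `k`, exactly half contain a given `l ≠ k`. -/
lemma sum_ite_mem_half_sub {n : ℕ} {k l : Fin n} (hkl : k ≠ l) :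
    ∑ s : Finset (Fin n), (if k ∈ s then (1 / 2 : ℝ) - (if l ∈ s then 1 else 0) else 0) = 0 := by
  set F : Finset (Fin n) → ℝ :=
    fun s => if k ∈ s then (1 / 2 : ℝ) - (if l ∈ s then 1 else 0) else 0 with hF
  have h : ∑ s, F (symmDiff s {l}) = ∑ s, F s :=
    Equiv.sum_comp (Function.Involutive.toPerm (fun s : Finset (Fin n) => symmDiff s {l})
      fun s => symmDiff_symmDiff_cancel_right _ _) F
  have hanti : ∀ s, F (symmDiff s {l}) = -F s := by
    intro s
    by_cases hk : k ∈ s <;> by_cases hl : l ∈ s <;>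
      simp [hF, Finset.mem_symmDiff, hk, hl, hkl] <;> norm_num
  rw [Finset.sum_congr rfl fun s _ => hanti s, Finset.sum_neg_distrib] at h
  linarith

/-- The total mass of the unnormalized density `4⁻ᵏ` on the `k`-th cell. -/
noncomputable def dyadicMass (n : ℕ) : ℝ :=
  ∑ s : Finset (Fin n), ∑ k ∈ s, (2 : ℝ) ^ (k : ℕ) * (4 ^ (k : ℕ))⁻¹

lemma dyadicMass_pos {n : ℕ} (hn : 0 < n) : 0 < dyadicMass n := by
  refine Finset.sum_pos' (fun s _ => Finset.sum_nonneg fun k _ => by positivity)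
    ⟨Finset.univ, Finset.mem_univ _, Finset.sum_pos (fun k _ => by positivity) ⟨⟨0, hn⟩, by simp⟩⟩

lemma integral_count_top {n : ℕ} (g : Finset (Fin n) → ℝ) :
    ∫ s, g s ∂(@Measure.count (Finset (Fin n)) ⊤) = ∑ s, g s := by
  let _ : MeasurableSpace (Finset (Fin n)) := ⊤
  have : DiscreteMeasurableSpace (Finset (Fin n)) := ⟨fun _ => trivial⟩
  rw [integral_fintype Integrable.of_finite]
  simp [Measure.real]

/-- The instance whose signal is a set `s` of dyadic cells, uniformly weighted, the value having
an approximately equal-revenue density on the cells in `s`. -/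
noncomputable def dyadicInstance (n : ℕ) (hn : 0 < n) : SignalInstance where
  S := Finset (Fin n)
  mS := ⊤
  μ := @Measure.count _ ⊤
  sigmaFinite := by
    let _ : MeasurableSpace (Finset (Fin n)) := ⊤
    infer_instance
  f := dyadicStep fun k => (dyadicMass n)⁻¹ * (4 ^ k)⁻¹
  f_meas := measurable_dyadicStep_uncurry _
  f_nonneg := dyadicStep_nonneg fun k =>
    mul_nonneg (inv_nonneg.2 (dyadicMass_pos hn).le) (by positivity)
  f_zero t s ht := dyadicStep_of_neg _ ht s
  f_prob := by
    rw [integral_count_top]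
    simp only [setIntegral_dyadicStep, mul_left_comm _ (dyadicMass n)⁻¹, ← Finset.mul_sum]
    exact inv_mul_cancel₀ (dyadicMass_pos hn).ne'

lemma dyadicInstance_DRev_le (n : ℕ) (hn : 0 < n) :
    (dyadicInstance n hn).DRev ≤ 2 ^ n * (4 * (dyadicMass n)⁻¹) := by
  have hC : 0 ≤ (dyadicMass n)⁻¹ := inv_nonneg.2 (dyadicMass_pos hn).le
  refine (integral_count_top (n := n) _).trans_le ?_
  refine (Finset.sum_le_card_nsmul _ _ (4 * (dyadicMass n)⁻¹) fun s _ => ?_).trans_eq (by simp)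
  refine csSup_le ⟨0, 0, le_rfl, by simp⟩ ?_
  rintro y ⟨r, hr, rfl⟩
  exact mul_setIntegral_dyadicStep_le hC hr s

lemma dyadicInstance_Rev (n : ℕ) (hn : 0 < n) :
    (dyadicInstance n hn).Rev (dyadicStep (n := n) fun k => 2 ^ k / 2) =
      (dyadicMass n)⁻¹ * (n * 2 ^ n) / 4 := by
  refine (integral_count_top (n := n) _).trans ?_
  have h : ∀ s : Finset (Fin n), ∫ t in Ici (0 : ℝ), (dyadicInstance n hn).f t s *
      dyadicStep (fun k => 2 ^ k / 2) t s = (dyadicMass n)⁻¹ / 2 * s.card := by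
    intro s
    simp only [dyadicInstance, dyadicStep_mul, setIntegral_dyadicStep]
    rw [Finset.sum_congr rfl (g := fun _ => (dyadicMass n)⁻¹ / 2), Finset.sum_const,
      nsmul_eq_mul, mul_comm]
    intro k _
    have h4 : (4 : ℝ) ^ (k : ℕ) = 2 ^ (k : ℕ) * 2 ^ (k : ℕ) := by
      rw [← mul_pow]
      norm_num
    rw [h4]
    field_simp
  rw [Finset.sum_congr rfl fun s _ => h s, ← Finset.mul_sum, ← two_mul_sum_card_finset]
  ring

lemma dyadicInstance_not_regular (n : ℕ) (hn : 0 < n) (hn3 : 3 ≤ n) :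
    ∃ s : (dyadicInstance n hn).S, ∀ l u : ℝ,
      Function.support (fun t => (dyadicInstance n hn).f t s) ≠ Icc l u := by
  let k : Fin 3 → Fin n := Fin.castLE hn3
  refine ⟨({k 0, k 2} : Finset (Fin n)), fun l u h => ?_⟩
  have hC := (dyadicMass_pos hn).ne'
  have hval : ∀ i : Fin 3, ((2 : ℝ) ^ (i : ℕ) ∈ Icc l u ↔ i = 0 ∨ i = 2) := by
    intro i
    have hi : (2 : ℝ) ^ (i : ℕ) ∈ dyadicCell (k i) :=
      ⟨le_rfl, pow_lt_pow_right₀ one_lt_two (Nat.lt_succ_self _)⟩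
    rw [← h, Function.mem_support]
    simp only [dyadicInstance]
    rw [dyadicStep_of_mem _ hi]
    simp [k, hC, or_iff_not_imp_left]
  have h0 := (hval 0).2 (by simp)
  have h2 := (hval 2).2 (by simp)
  have h1 := (hval 1).1 ⟨h0.1.trans (by norm_num), le_trans (by norm_num) h2.2⟩
  simp at h1

/-- Reporting truthfully is optimal: a type in cell `k` gets at least `t / 2` from each signal
containing `k`, while half of those signals give a misreport nothing. -/
lemma dyadicInstance_BIC (n : ℕ) (hn : 0 < n) (t t' : ℝ) (ht : 0 ≤ t) :
    ∫ s, (dyadicInstance n hn).f t s * (t * dyadicStep (n := n) (fun _ => 1) t' s -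
        dyadicStep (n := n) (fun k => 2 ^ k / 2) t' s) ∂(dyadicInstance n hn).μ ≤
      ∫ s, (dyadicInstance n hn).f t s * (t * dyadicStep (n := n) (fun _ => 1) t s -
        dyadicStep (n := n) (fun k => 2 ^ k / 2) t s) ∂(dyadicInstance n hn).μ := by
  refine (integral_count_top (n := n) _).trans_le
    (le_trans ?_ (integral_count_top (n := n) _).ge)
  simp only [dyadicInstance]
  have hC : 0 ≤ (dyadicMass n)⁻¹ := inv_nonneg.2 (dyadicMass_pos hn).le
  by_cases h : ∃ k : Fin n, t ∈ dyadicCell k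
  swap
  · push Not at h
    simp [dyadicStep_of_notMem _ h]
  obtain ⟨k, hk⟩ := h
  have hkt : (2 : ℝ) ^ (k : ℕ) ≤ t := hk.1
  set c : ℝ := (dyadicMass n)⁻¹ * (4 ^ (k : ℕ))⁻¹
  have hc : 0 ≤ c := by positivity
  by_cases h' : ∃ l : Fin n, t' ∈ dyadicCell l
  · obtain ⟨l, hl⟩ := h'
    simp only [dyadicStep_of_mem _ hk, dyadicStep_of_mem _ hl]
    by_cases hkl : k = l
    · rw [hkl]
    rw [← sub_nonneg, ← Finset.sum_sub_distrib]
    have hpos : (0 : ℝ) ≤ 2 ^ (l : ℕ) := by positivity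
    have hzero := sum_ite_mem_half_sub hkl
    calc (0 : ℝ) = ∑ s : Finset (Fin n), c * t *
          (if k ∈ s then (1 / 2 : ℝ) - (if l ∈ s then 1 else 0) else 0) := by
          rw [← Finset.mul_sum, hzero, mul_zero]
      _ ≤ _ := Finset.sum_le_sum fun s _ => ?_
    by_cases hks : k ∈ s
    · simp only [hks, if_true]
      rw [← mul_sub, mul_assoc]
      refine mul_le_mul_of_nonneg_left ?_ hc
      split_ifs <;> linarith
    · simp [hks]
  · push Not at h'
    refine Finset.sum_le_sum fun s _ => ?_
    simp only [dyadicStep_of_notMem _ h', dyadicStep_of_mem _ hk]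
    split_ifs
    · refine mul_le_mul_of_nonneg_left ?_ hc
      linarith
    · simp

/-- **Unbounded gap for irregular distributions even without negative payments.**
For every `M > 0` there exists a single-buyer pricing instance with signals — whose
conditional value distributions are not all regular — together with an ex post IR, BIC
mechanism with no negative payments, whose expected revenue is at least `M` times the
optimal revenue under public signals of that instance. -/
theorem exists_irregular_instance_private_revenue_ge_mul_public (M : ℝ) (hM : 0 < M) :
    ∃ (I : SignalInstance) (x p : ℝ → I.S → ℝ),
      -- the conditional value distributions are not all regular
      (¬ ∀ s : I.S, ∃ l u : ℝ, l ≤ u ∧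
        Function.support (fun t => I.f t s) = Icc l u ∧
        MonotoneOn (fun t => t - (∫ t' in Ici t, I.f t' s) / I.f t s) (Icc l u)) ∧
      Measurable (fun q : ℝ × I.S => x q.1 q.2) ∧
      Measurable (fun q : ℝ × I.S => p q.1 q.2) ∧
      (∀ t s, 0 ≤ t → x t s ∈ Icc (0:ℝ) 1) ∧
      -- ex post individual rationality
      (∀ t s, 0 ≤ t → 0 ≤ t * x t s - p t s) ∧
      -- no negative payments
      (∀ t s, 0 ≤ t → 0 ≤ p t s) ∧
      -- Bayesian incentive compatibility
      (∀ t t' : ℝ, 0 ≤ t → 0 ≤ t' →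
        ∫ s, I.f t s * (t * x t' s - p t' s) ∂I.μ ≤
          ∫ s, I.f t s * (t * x t s - p t s) ∂I.μ) ∧
      M * I.DRev ≤ I.Rev p := by
  obtain ⟨m, hm⟩ := exists_nat_ge (16 * M)
  have hn : 0 < m + 3 := by omega
  have hcases : ∀ (t : ℝ) (s : Finset (Fin (m + 3))), 0 ≤ t →
      dyadicStep (fun _ => 1) t s ∈ Icc (0 : ℝ) 1 ∧
      0 ≤ t * dyadicStep (fun _ => 1) t s - dyadicStep (fun k => 2 ^ k / 2) t s := by
    intro t s ht
    by_cases h : ∃ k : Fin (m + 3), t ∈ dyadicCell k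
    · obtain ⟨k, hk⟩ := h
      have hkt : (2 : ℝ) ^ (k : ℕ) ≤ t := hk.1
      simp only [dyadicStep_of_mem _ hk]
      split_ifs
      · exact ⟨by simp, by linarith⟩
      · simp
    · push Not at h
      simp [dyadicStep_of_notMem _ h]
  refine ⟨dyadicInstance (m + 3) hn, dyadicStep (n := m + 3) fun _ => 1,
    dyadicStep (n := m + 3) fun k => 2 ^ k / 2, fun hreg => ?_,
    measurable_dyadicStep_uncurry _, measurable_dyadicStep_uncurry _,
    fun t s ht => (hcases t s ht).1, fun t s ht => (hcases t s ht).2,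
    fun t s _ => dyadicStep_nonneg (fun k => by positivity) t s,
    fun t t' ht _ => dyadicInstance_BIC _ hn t t' ht, ?_⟩
  · obtain ⟨s, hs⟩ := dyadicInstance_not_regular (m + 3) hn (by omega)
    obtain ⟨l, u, -, hsupp, -⟩ := hreg s
    exact hs l u hsupp
  · rw [dyadicInstance_Rev]
    refine (mul_le_mul_of_nonneg_left (dyadicInstance_DRev_le _ hn) hM.le).trans ?_
    have hC : 0 ≤ (dyadicMass (m + 3))⁻¹ * 2 ^ (m + 3) :=
      mul_nonneg (inv_nonneg.2 (dyadicMass_pos hn).le) (by positivity)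
    have hm3 : 16 * M ≤ ((m + 3 : ℕ) : ℝ) := by
      push_cast
      linarith
    nlinarith [mul_le_mul_of_nonneg_right hm3 hC]
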